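/- arXiv:2005.12136 — 4 statements merged into one kernel-verified Lean document; each statement's English description precedes it below -/
import Mathlib

section
/- Let β : ℝ → ℝ be continuous on [0, ∞) with β(0) = 0 and β(s) > 0 for every s > 0, and let v : ℕ → ℝ be a sequence with v(n) ≥ 0 for all n and v(n+1) ≤ v(n) − β(v(n)) for all n. Then v(n) → 0 as n → ∞. -/
open Set Filter

/-- Discrete comparison lemma: if `β` is continuous on `[0,∞)`, vanishes at `0`, is positive on
`(0,∞)`, and the nonnegative sequence `v` satisfies `v (n+1) ≤ v n - β (v n)`, then `v n → 0`. -/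
theorem lyapunov_comparison_sequence_tendsto_zero
    (β : ℝ → ℝ) (hβc : ContinuousOn β (Ici (0 : ℝ)))
    (hβ0 : β 0 = 0) (hβpos : ∀ s : ℝ, 0 < s → 0 < β s)
    (v : ℕ → ℝ) (hv : ∀ n, 0 ≤ v n)
    (hdec : ∀ n, v (n + 1) ≤ v n - β (v n)) :
    Tendsto v atTop (nhds 0) := by
  have hβnn : ∀ s : ℝ, 0 ≤ s → 0 ≤ β s := by
    intro s hs
    rcases hs.eq_or_lt with h | h
    · rw [← h, hβ0]
    · exact (hβpos s h).le
  have hanti : Antitone v := antitone_nat_of_succ_le fun n => by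
    have h1 := hdec n
    have h2 := hβnn _ (hv n)
    linarith
  have hbdd : BddBelow (range v) := ⟨0, by rintro _ ⟨n, rfl⟩; exact hv n⟩
  have hlim := tendsto_atTop_ciInf hanti hbdd
  set L := ⨅ n, v n with hL
  have hL0 : 0 ≤ L := ge_of_tendsto' hlim hv
  have hw : Tendsto v atTop (nhdsWithin L (Ici 0)) :=
    tendsto_nhdsWithin_iff.2 ⟨hlim, Eventually.of_forall hv⟩
  have hβlim : Tendsto (fun n => β (v n)) atTop (nhds (β L)) :=
    (hβc L hL0).tendsto.comp hw
  have hle : L ≤ L - β L :=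
    le_of_tendsto_of_tendsto' ((tendsto_add_atTop_iff_nat 1).2 hlim) (hlim.sub hβlim) hdec
  rcases hL0.eq_or_lt with h | h
  · rw [h]
    exact hlim
  · have := hβpos L h
    linarith
end

section
/- Let E be a real normed vector space, Y ⊆ E a set, φ : E → E a map with φ(Y) ⊆ Y, x_f ∈ Y, and V : E → ℝ. Let α₁, α₂ : ℝ → ℝ be functions with α_i(0) = 0, continuous and strictly increasing on [0, ∞), and tending to ∞ at ∞, and let α_V : ℝ → ℝ be a function with α_V(0) = 0 that is continuous and strictly increasing on [0, ∞). Assume α₁(‖x − x_f‖) ≤ V(x) ≤ α₂(‖x − x_f‖) for all x ∈ Y, and V(φ(x)) ≤ V(x) − α_V(‖x − x_f‖) for all x ∈ Y. Then for every x₀ ∈ Y the orbit converges to x_f: φ^[n](x₀) → x_f as n → ∞. -/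
open Set Filter Function

/-- Attractivity from Lyapunov conditions: the orbit of any `x₀ ∈ Y` converges to `x_f`. -/
theorem lyapunov_orbit_tendsto
    {E : Type*} [NormedAddCommGroup E] [NormedSpace ℝ E]
    (Y : Set E) (φ : E → E) (hφ : Set.MapsTo φ Y Y)
    (x_f : E) (hx_f : x_f ∈ Y) (V : E → ℝ)
    (α₁ α₂ : ℝ → ℝ)
    (hα₁0 : α₁ 0 = 0) (hα₁c : ContinuousOn α₁ (Ici (0 : ℝ)))
    (hα₁m : StrictMonoOn α₁ (Ici (0 : ℝ)))
    (hα₁top : Tendsto α₁ atTop atTop)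
    (hα₂0 : α₂ 0 = 0) (hα₂c : ContinuousOn α₂ (Ici (0 : ℝ)))
    (hα₂m : StrictMonoOn α₂ (Ici (0 : ℝ)))
    (hα₂top : Tendsto α₂ atTop atTop)
    (α_V : ℝ → ℝ) (hαV0 : α_V 0 = 0)
    (hαVc : ContinuousOn α_V (Ici (0 : ℝ)))
    (hαVm : StrictMonoOn α_V (Ici (0 : ℝ)))
    (hbound : ∀ x ∈ Y, α₁ (‖x - x_f‖) ≤ V x ∧ V x ≤ α₂ (‖x - x_f‖))
    (hdec : ∀ x ∈ Y, V (φ x) ≤ V x - α_V (‖x - x_f‖)) :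
    ∀ x₀ ∈ Y, Tendsto (fun n => φ^[n] x₀) atTop (nhds x_f) := by
  intro x₀ hx₀
  have hY : ∀ n, φ^[n] x₀ ∈ Y := fun n => hφ.iterate n hx₀
  have hpos : ∀ α : ℝ → ℝ, α 0 = 0 → StrictMonoOn α (Ici (0 : ℝ)) → ∀ t, 0 ≤ t → 0 ≤ α t := by
    intro α h0 hm t ht
    have h := hm.monotoneOn (mem_Ici.2 le_rfl) (mem_Ici.2 ht) ht
    rwa [h0] at h
  have hstep : ∀ n, V (φ^[n + 1] x₀) ≤ V (φ^[n] x₀) - α_V ‖φ^[n] x₀ - x_f‖ := by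
    intro n
    rw [Function.iterate_succ_apply']
    exact hdec _ (hY n)
  have hanti : Antitone (fun n => V (φ^[n] x₀)) := by
    refine antitone_nat_of_succ_le fun n => ?_
    have h1 := hstep n
    have h2 := hpos α_V hαV0 hαVm _ (norm_nonneg (φ^[n] x₀ - x_f))
    linarith
  have hbdd : BddBelow (range (fun n => V (φ^[n] x₀))) := by
    refine ⟨0, ?_⟩
    rintro _ ⟨n, rfl⟩
    exact (hpos α₁ hα₁0 hα₁m _ (norm_nonneg _)).trans (hbound _ (hY n)).1
  have hlim := tendsto_atTop_ciInf hanti hbdd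
  have hdiff := hlim.sub (hlim.comp (tendsto_add_atTop_nat 1))
  rw [sub_self] at hdiff
  rw [Metric.tendsto_atTop']
  intro ε hε
  have hαε : 0 < α_V ε := by
    have h := hαVm (mem_Ici.2 le_rfl) (mem_Ici.2 hε.le) hε
    rwa [hαV0] at h
  obtain ⟨N, hN⟩ := eventually_atTop.1 (hdiff.eventually (gt_mem_nhds hαε))
  refine ⟨N, fun n hn => ?_⟩
  have h1 := hN n (le_of_lt hn)
  simp only [Function.comp_apply] at h1
  have h2 := hstep n
  rw [dist_eq_norm]
  refine (hαVm.lt_iff_lt (mem_Ici.2 (norm_nonneg _)) (mem_Ici.2 hε.le)).1 ?_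
  linarith
end

section
/- Let E be a real normed vector space, Y ⊆ E a set, φ : E → E a map with φ(Y) ⊆ Y, x_f ∈ Y, V : E → ℝ, r > 0, and α_V : ℝ → ℝ a function with α_V(0) = 0 that is continuous and strictly increasing on [0, ∞). Assume V(x) ≥ 0 for all x ∈ Y, and the decrease condition V(φ(x)) ≤ V(x) − α_V(‖x − x_f‖) holds for every x ∈ Y with ‖x − x_f‖ ≥ r. Then for every x₀ ∈ Y the orbit enters the open ball of radius r around x_f in finite time: there exists n ∈ ℕ with n ≤ V(x₀) / α_V(r) + 1 such that ‖φ^[n](x₀) − x_f‖ < r. -/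
open Set Function

/-- Finite-time reaching: if the Lyapunov decrease holds outside the ball of radius `r`, the
orbit enters the open ball of radius `r` around `x_f` within `V x₀ / α_V r + 1` steps. -/
theorem finite_time_reaching
    {E : Type*} [NormedAddCommGroup E] [NormedSpace ℝ E]
    (Y : Set E) (φ : E → E) (hφ : Set.MapsTo φ Y Y)
    (x_f : E) (hx_f : x_f ∈ Y) (V : E → ℝ)
    (r : ℝ) (hr : 0 < r)
    (α_V : ℝ → ℝ) (hαV0 : α_V 0 = 0)
    (hαVc : ContinuousOn α_V (Ici (0 : ℝ)))
    (hαVm : StrictMonoOn α_V (Ici (0 : ℝ)))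
    (hVnonneg : ∀ x ∈ Y, 0 ≤ V x)
    (hdec : ∀ x ∈ Y, r ≤ ‖x - x_f‖ → V (φ x) ≤ V x - α_V (‖x - x_f‖)) :
    ∀ x₀ ∈ Y, ∃ n : ℕ, (n : ℝ) ≤ V x₀ / α_V r + 1 ∧ ‖φ^[n] x₀ - x_f‖ < r := by
  intro x₀ hx₀
  have hα : 0 < α_V r := by
    have h := hαVm (mem_Ici.2 le_rfl) (mem_Ici.2 hr.le) hr
    rwa [hαV0] at h
  have hY : ∀ n : ℕ, φ^[n] x₀ ∈ Y := fun n => hφ.iterate n hx₀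
  by_contra! hcon
  have key : ∀ n : ℕ, (n : ℝ) ≤ V x₀ / α_V r + 1 → V (φ^[n] x₀) ≤ V x₀ - n * α_V r := by
    intro n
    induction n with
    | zero => intro _; simp
    | succ k ih =>
      intro hk
      push_cast at hk ⊢
      have hk' : (k : ℝ) ≤ V x₀ / α_V r + 1 := by linarith
      have h1 := ih hk'
      have h2 := hcon k hk'
      have h3 := hdec _ (hY k) h2
      have h4 := hαVm.monotoneOn (mem_Ici.2 hr.le) (mem_Ici.2 (norm_nonneg _)) h2
      rw [Function.iterate_succ_apply']
      linarith
  have h0 : 0 ≤ V x₀ / α_V r := div_nonneg (hVnonneg _ hx₀) hα.le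
  have hfl := Nat.floor_le h0
  have hlt := Nat.lt_floor_add_one (V x₀ / α_V r)
  have h5 := key (⌊V x₀ / α_V r⌋₊ + 1) (by push_cast; linarith)
  have h6 := hVnonneg _ (hY (⌊V x₀ / α_V r⌋₊ + 1))
  rw [div_lt_iff₀ hα] at hlt
  push_cast at h5
  linarith
end

section
/- Let E be a real normed vector space, Y ⊆ E a set, φ : E → E a map with φ(Y) ⊆ Y, x_f ∈ Y, V : E → ℝ, r > 0, and α_V : ℝ → ℝ a function with α_V(0) = 0 that is continuous and strictly increasing on [0, ∞). Assume V(x) ≥ 0 for all x ∈ Y, and the decrease condition V(φ(x)) ≤ V(x) − α_V(‖x − x_f‖) holds for every x ∈ Y with ‖x − x_f‖ ≥ r. Then for every x₀ ∈ Y the orbit visits the open ball of radius r around x_f infinitely often: for every N ∈ ℕ there exists n ≥ N with ‖φ^[n](x₀) − x_f‖ < r. -/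
open Set Function

/-- The orbit visits the open ball of radius `r` around `x_f` infinitely often. -/
theorem orbit_visits_ball_infinitely_often
    {E : Type*} [NormedAddCommGroup E] [NormedSpace ℝ E]
    (Y : Set E) (φ : E → E) (hφ : Set.MapsTo φ Y Y)
    (x_f : E) (hx_f : x_f ∈ Y) (V : E → ℝ)
    (r : ℝ) (hr : 0 < r)
    (α_V : ℝ → ℝ) (hαV0 : α_V 0 = 0)
    (hαVc : ContinuousOn α_V (Ici (0 : ℝ)))
    (hαVm : StrictMonoOn α_V (Ici (0 : ℝ)))
    (hVnonneg : ∀ x ∈ Y, 0 ≤ V x)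
    (hdec : ∀ x ∈ Y, r ≤ ‖x - x_f‖ → V (φ x) ≤ V x - α_V (‖x - x_f‖)) :
    ∀ x₀ ∈ Y, ∀ N : ℕ, ∃ n : ℕ, N ≤ n ∧ ‖φ^[n] x₀ - x_f‖ < r := by
  intro x₀ hx₀ N
  by_contra! h
  have hY : ∀ n, φ^[n] x₀ ∈ Y := fun n => hφ.iterate n hx₀
  have hpos : 0 < α_V r := by
    have := hαVm (mem_Ici.2 le_rfl) (mem_Ici.2 hr.le) hr
    rwa [hαV0] at this
  have key : ∀ k : ℕ, V (φ^[N + k] x₀) ≤ V (φ^[N] x₀) - k * α_V r := by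
    intro k
    induction k with
    | zero => simp
    | succ k ih =>
      have hk := h (N + k) (Nat.le_add_right _ _)
      have h1 := hdec _ (hY (N + k)) hk
      have h2 := hαVm.monotoneOn (mem_Ici.2 hr.le) (mem_Ici.2 (norm_nonneg _)) hk
      rw [← add_assoc, Function.iterate_succ_apply']
      push_cast
      linarith
  obtain ⟨k, hk⟩ := exists_nat_gt (V (φ^[N] x₀) / α_V r)
  rw [div_lt_iff₀ hpos] at hk
  linarith [key k, hVnonneg _ (hY (N + k))]
end
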